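/- Let Γ and Ω be two non-parallel affine planes in ℝ³, let p be a point lying on neither plane, let f be the central projection from Γ to Ω through p, let l be the vanishing line of Γ and let m be the vanishing line of Ω. Then the image under f of each of the two open half-planes of Γ bounded by l is exactly one of the two open half-planes of Ω bounded by m. -/

import Mathlib

noncomputable section

/-- Points of `ℝ³`. -/
abbrev E3 : Type := Fin 3 → ℝ

/-- An affine plane in `ℝ³`: a nonempty affine subspace whose direction has dimension 2. -/
def IsPlane (s : AffineSubspace ℝ E3) : Prop :=
  (s : Set E3).Nonempty ∧ Module.finrank ℝ s.direction = 2

/-- `v` is a vanishing point of the plane `Γ` with respect to the central projection from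
`Γ` to `Ω` through `p`: it lies in `Γ` and the line through `p` and `v` is parallel to `Ω`. -/
def VanishingPt (Γ Ω : AffineSubspace ℝ E3) (p v : E3) : Prop :=
  v ∈ Γ ∧ v -ᵥ p ∈ Ω.direction

/-- `f` is the central projection from `Γ` to `Ω` through `p`: every non-vanishing point
`a` of `Γ` is sent to the (unique) intersection point of the line through `p` and `a`
with `Ω`. -/
def IsCentralProj (Γ Ω : AffineSubspace ℝ E3) (p : E3) (f : E3 → E3) : Prop :=
  ∀ a ∈ Γ, a -ᵥ p ∉ Ω.direction → f a ∈ Ω ∧ f a ∈ affineSpan ℝ {p, a}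

theorem plane_functional (s : AffineSubspace ℝ E3) (p : E3) (hs : IsPlane s) (hp : p ∉ s) :
    ∃ φ : E3 →ₗ[ℝ] ℝ, (∀ x, x ∈ s ↔ φ (x - p) = 1) ∧ ∀ v, v ∈ s.direction ↔ φ v = 0 := by
  obtain ⟨⟨q, hq⟩, hd⟩ := hs
  have hq : q ∈ s := hq
  have hw : q - p ∉ s.direction := by
    intro h
    apply hp
    have h2 := s.direction.neg_mem h
    have := AffineSubspace.vadd_mem_of_mem_direction h2 hq
    simpa using this
  obtain ⟨g, hg, hle⟩ := Submodule.exists_le_ker_of_notMem hw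
  have hlt : Module.finrank ℝ (LinearMap.ker g) < 3 := by
    have h1 : LinearMap.ker g ≠ ⊤ := by
      intro h
      have : q - p ∈ LinearMap.ker g := by rw [h]; trivial
      exact hg this
    have := Submodule.finrank_lt h1
    simpa using this
  have heq : s.direction = LinearMap.ker g :=
    Submodule.eq_of_le_of_finrank_le hle (hd.symm ▸ Nat.lt_succ_iff.mp hlt)
  have hdir : ∀ v, v ∈ s.direction ↔ g v = 0 := by
    intro v; rw [heq]; exact LinearMap.mem_ker
  refine ⟨(g (q - p))⁻¹ • g, ?_, ?_⟩
  · intro x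
    have h1 : x ∈ s ↔ x -ᵥ q ∈ s.direction :=
      (AffineSubspace.vsub_right_mem_direction_iff_mem hq x).symm
    rw [h1, hdir]
    have h2 : x - p = (x - q) + (q - p) := by abel
    rw [vsub_eq_sub, h2, LinearMap.smul_apply, map_add, smul_eq_mul, mul_add,
      inv_mul_cancel₀ hg]
    rw [add_eq_right, mul_eq_zero, or_iff_right (inv_ne_zero hg)]
  · intro v
    rw [hdir]
    rw [LinearMap.smul_apply, smul_eq_mul, mul_eq_zero, or_iff_right (inv_ne_zero hg)]

theorem image_comp_aux {U V : Set E3} {F G : E3 → E3} (hF : ContinuousOn F U)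
    (hG : ContinuousOn G V) (hFU : ∀ x ∈ U, F x ∈ V) (hGV : ∀ y ∈ V, G y ∈ U)
    (hGF : ∀ x ∈ U, G (F x) = x) (hFG : ∀ y ∈ V, F (G y) = y) {a : E3} (ha : a ∈ U) :
    F '' connectedComponentIn U a = connectedComponentIn V (F a) := by
  have key : ∀ {U V : Set E3} {F : E3 → E3}, ContinuousOn F U → (∀ x ∈ U, F x ∈ V) →
      ∀ a ∈ U, F '' connectedComponentIn U a ⊆ connectedComponentIn V (F a) := by
    intro U V F hF hFU a ha
    apply IsPreconnected.subset_connectedComponentIn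
    · exact isPreconnected_connectedComponentIn.image _
        (hF.mono (connectedComponentIn_subset _ _))
    · exact ⟨a, mem_connectedComponentIn ha, rfl⟩
    · rintro _ ⟨x, hx, rfl⟩
      exact hFU x (connectedComponentIn_subset _ _ hx)
  apply subset_antisymm (key hF hFU a ha)
  intro y hy
  have h := key hG hGV (F a) (hFU a ha) ⟨y, hy, rfl⟩
  rw [hGF a ha] at h
  exact ⟨G y, h, hFG y (connectedComponentIn_subset _ _ hy)⟩

theorem proj_facts (φ ψ : E3 →ₗ[ℝ] ℝ) (p x : E3) (h1 : φ (x - p) = 1) (h2 : ψ (x - p) ≠ 0) :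
    ψ ((p + (ψ (x - p))⁻¹ • (x - p)) - p) = 1 ∧
    φ ((p + (ψ (x - p))⁻¹ • (x - p)) - p) = (ψ (x - p))⁻¹ := by
  rw [add_sub_cancel_left, map_smul, map_smul, h1]
  exact ⟨inv_mul_cancel₀ h2, mul_one _⟩

/-- The open half-planes of `Γ` bounded by its vanishing line `l` are the connected
components of `Γ \ l`; the central projection `f` maps each of them onto an open
half-plane of `Ω` bounded by the vanishing line `m` of `Ω`, namely onto a connected
component of `Ω \ m`. -/
theorem centralProj_halfPlane_image
    (Γ Ω : AffineSubspace ℝ E3) (p : E3) (f : E3 → E3)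
    (hΓ : IsPlane Γ) (hΩ : IsPlane Ω)
    (hnp : Γ.direction ≠ Ω.direction)
    (hpΓ : p ∉ Γ) (hpΩ : p ∉ Ω)
    (hf : IsCentralProj Γ Ω p f) :
    ∀ a : E3, a ∈ Γ → a -ᵥ p ∉ Ω.direction →
      f '' connectedComponentIn {x : E3 | x ∈ Γ ∧ ¬ VanishingPt Γ Ω p x} a =
        connectedComponentIn {y : E3 | y ∈ Ω ∧ ¬ VanishingPt Ω Γ p y} (f a) := by
  intro a ha hav
  obtain ⟨φ, hφ, hφd⟩ := plane_functional Γ p hΓ hpΓ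
  obtain ⟨ψ, hψ, hψd⟩ := plane_functional Ω p hΩ hpΩ
  have hU : {x : E3 | x ∈ Γ ∧ ¬ VanishingPt Γ Ω p x} =
      {x | φ (x - p) = 1 ∧ ψ (x - p) ≠ 0} := by
    ext x
    simp only [VanishingPt, Set.mem_ofPred_eq, vsub_eq_sub, hψd, hφ]
    tauto
  have hV : {y : E3 | y ∈ Ω ∧ ¬ VanishingPt Ω Γ p y} =
      {x | ψ (x - p) = 1 ∧ φ (x - p) ≠ 0} := by
    ext x
    simp only [VanishingPt, Set.mem_ofPred_eq, vsub_eq_sub, hφd, hψ]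
    tauto
  have hfe : ∀ x, φ (x - p) = 1 → ψ (x - p) ≠ 0 →
      f x = p + (ψ (x - p))⁻¹ • (x - p) := by
    intro x h1 h2
    obtain ⟨h3, h4⟩ := hf x ((hφ x).2 h1) (by rw [vsub_eq_sub, hψd]; exact h2)
    obtain ⟨r, hr⟩ := mem_affineSpan_pair_iff_exists_lineMap_eq.1 h4
    rw [AffineMap.lineMap_apply, vsub_eq_sub, vadd_eq_add] at hr
    rw [hψ, ← hr, add_sub_cancel_right, map_smul, smul_eq_mul] at h3
    rw [← hr, eq_inv_of_mul_eq_one_left h3, add_comm]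
  have hcont : ∀ (φ ψ : E3 →ₗ[ℝ] ℝ), ContinuousOn (fun x => p + (ψ (x - p))⁻¹ • (x - p))
      {x | φ (x - p) = 1 ∧ ψ (x - p) ≠ 0} := by
    intro φ ψ
    have hc : Continuous ψ := ψ.continuous_of_finiteDimensional
    have hc' : Continuous fun x => ψ (x - p) := hc.comp (by fun_prop)
    exact continuousOn_const.add
      ((hc'.continuousOn.inv₀ fun x hx => hx.2).smul (by fun_prop))
  have hmaps : ∀ (φ ψ : E3 →ₗ[ℝ] ℝ) (x : E3), φ (x - p) = 1 ∧ ψ (x - p) ≠ 0 →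
      ψ ((p + (ψ (x - p))⁻¹ • (x - p)) - p) = 1 ∧
      φ ((p + (ψ (x - p))⁻¹ • (x - p)) - p) ≠ 0 := by
    intro φ ψ x hx
    obtain ⟨h1, h2⟩ := proj_facts φ ψ p x hx.1 hx.2
    exact ⟨h1, by rw [h2]; exact inv_ne_zero hx.2⟩
  have hinv : ∀ (φ ψ : E3 →ₗ[ℝ] ℝ) (x : E3), φ (x - p) = 1 ∧ ψ (x - p) ≠ 0 →
      p + (φ ((p + (ψ (x - p))⁻¹ • (x - p)) - p))⁻¹ •
        ((p + (ψ (x - p))⁻¹ • (x - p)) - p) = x := by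
    intro φ ψ x hx
    obtain ⟨h1, h2⟩ := proj_facts φ ψ p x hx.1 hx.2
    rw [h2, add_sub_cancel_left, inv_inv, smul_inv_smul₀ hx.2]
    abel
  rw [hU, hV]
  have haU : φ (a - p) = 1 ∧ ψ (a - p) ≠ 0 := ⟨(hφ a).1 ha, fun h => hav ((hψd _).2 h)⟩
  rw [hfe a haU.1 haU.2]
  rw [Set.image_congr (g := fun x => p + (ψ (x - p))⁻¹ • (x - p)) fun x hx => by
    have := connectedComponentIn_subset _ _ hx
    exact hfe x this.1 this.2]
  exact image_comp_aux (F := fun x => p + (ψ (x - p))⁻¹ • (x - p))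
    (G := fun x => p + (φ (x - p))⁻¹ • (x - p))
    (hcont φ ψ) (hcont ψ φ) (hmaps φ ψ) (hmaps ψ φ) (hinv φ ψ) (hinv ψ φ) haU
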